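/- Let f ∈ L^∞(ℝⁿ), ψ₁(y)=e^{−|y|²}, ψ₂(y)=e^{|y|²}, and let ψ be a Schwartz function such that ψ·ψ₂ is Schwartz (e.g. ψ(y) = y_j y_k e^{−2|y|²}). Then for all x,ξ ∈ ℝⁿ and t ∈ (0,1]: |𝓕(f · ψ((·−x)/t))(ξ)| ≤ (2π)^{−n/2} ( H_{∞,f} * |𝓕(ψ(·/t)·ψ₂)| )(ξ), where H_{∞,f}(ξ) = sup_x |𝓕(f ψ₁(·−x))(ξ)| and the convolution is in ξ. -/

import Mathlib

open MeasureTheory Complex Real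
open scoped RealInnerProductSpace ENNReal

noncomputable section

abbrev E (n : ℕ) := EuclideanSpace ℝ (Fin n)

/-- The plane wave `e^{-i⟨y,ξ⟩}`. -/
def eK {n : ℕ} (y ξ : E n) : ℂ := Complex.exp (-Complex.I * Complex.ofReal ⟪y, ξ⟫)

/-- `H_{∞,f}(ξ) = sup_x |𝓕(f ψ₁(·−x))(ξ)|` with `ψ₁ = e^{-|·|²}`. -/
def Hinf {n : ℕ} (f : E n → ℂ) (ξ : E n) : ℝ :=
  ⨆ x : E n, ‖∫ y, f y * Complex.ofReal (Real.exp (-‖y - x‖ ^ 2)) * eK y ξ‖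

lemma aux_gauss_temperate {n : ℕ} (c : ℝ) (hc : 0 ≤ c) :
    (fun y : E n => Real.exp (-(c * ‖y‖ ^ 2))).HasTemperateGrowth := by
  have h1 : (fun y : E n => c * ‖y‖ ^ 2).HasTemperateGrowth := by fun_prop
  have ht : Set.range (fun y : E n => c * ‖y‖ ^ 2) ⊆ Set.Ioi (-1 : ℝ) := by
    rintro - ⟨y, rfl⟩
    have : 0 ≤ c * ‖y‖ ^ 2 := by positivity
    simp only [Set.mem_Ioi]
    linarith
  have hu : UniqueDiffOn ℝ (Set.Ioi (-1 : ℝ)) := isOpen_Ioi.uniqueDiffOn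
  have hd : ContDiff ℝ (⊤ : ℕ∞) (fun s : ℝ => Real.exp (-s)) := by fun_prop
  refine Function.HasTemperateGrowth.comp' (g := fun s : ℝ => Real.exp (-s)) ht hu
    hd.contDiffOn ?_ h1
  intro N
  refine ⟨0, Real.exp 1, (Real.exp_pos 1).le, fun m _ s hs => ?_⟩
  rw [norm_iteratedFDerivWithin_eq_norm_iteratedDerivWithin,
    iteratedDerivWithin_eq_iteratedDeriv hu
      ((hd.of_le (by exact_mod_cast le_top)).contDiffAt) hs]
  have := iteratedDeriv_comp_neg m Real.exp s
  rw [this]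
  simp only [Set.mem_Ioi] at hs
  simp [iteratedDeriv_eq_iterate]
  linarith

lemma aux_schwartz {n : ℕ} (Ψ : SchwartzMap (E n) ℂ) (t : ℝ) (ht : t ∈ Set.Ioc (0:ℝ) 1) :
    ∃ G : SchwartzMap (E n) ℂ, ∀ y, G y = Ψ (t⁻¹ • y) *
      Complex.ofReal (Real.exp (-‖t⁻¹ • y‖ ^ 2)) * Complex.ofReal (Real.exp (‖y‖ ^ 2)) := by
  have ht0 : t⁻¹ ≠ 0 := inv_ne_zero ht.1.ne'
  have hc : 0 ≤ (t⁻¹) ^ 2 - 1 := by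
    have : 1 ≤ t⁻¹ := (one_le_inv₀ ht.1).2 ht.2
    nlinarith
  have hg := aux_gauss_temperate (n := n) _ hc
  refine ⟨SchwartzMap.smulLeftCLM ℂ (fun y : E n => Real.exp (-(((t⁻¹) ^ 2 - 1) * ‖y‖ ^ 2)))
    (SchwartzMap.compCLMOfContinuousLinearEquiv ℝ
      (ContinuousLinearEquiv.smulLeft (Units.mk0 t⁻¹ ht0)) Ψ), fun y => ?_⟩
  rw [SchwartzMap.smulLeftCLM_apply_apply hg, SchwartzMap.compCLMOfContinuousLinearEquiv_apply]
  rw [mul_assoc, ← Complex.ofReal_mul, ← Real.exp_add, norm_smul, Complex.real_smul, mul_comm]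
  congr 3
  rw [mul_pow, Real.norm_eq_abs, sq_abs]
  ring_nf

lemma aux_eK_norm {n : ℕ} (y ξ : E n) : ‖eK y ξ‖ = 1 := by
  rw [eK, Complex.norm_exp]
  simp

lemma aux_eK_cont {n : ℕ} : Continuous (fun p : E n × E n => eK p.1 p.2) := by
  unfold eK
  fun_prop

lemma aux_gauss_int {n : ℕ} (x : E n) : Integrable (fun y : E n => Real.exp (-‖y - x‖ ^ 2)) := by
  have h : Integrable (fun y : E n => Real.exp (-‖y‖ ^ 2)) := by
    have := (GaussianFourier.integrable_cexp_neg_mul_sq_norm_add (V := E n) (b := 1) (by simp)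
      0 0).norm
    refine this.congr (Filter.Eventually.of_forall fun y => ?_)
    simp [Complex.norm_exp, ← Complex.ofReal_pow]
  exact h.comp_sub_right x

lemma aux_fg_int {n : ℕ} (f : E n → ℂ) (hf_meas : Measurable f) (B : ℝ)
    (hB : ∀ y, ‖f y‖ ≤ B) (x : E n) :
    Integrable (fun y => f y * Complex.ofReal (Real.exp (-‖y - x‖ ^ 2))) :=
  (aux_gauss_int x).ofReal.bdd_mul hf_meas.aestronglyMeasurable
    (Filter.Eventually.of_forall hB)

lemma aux_bound {n : ℕ} (f : E n → ℂ) (B : ℝ)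
    (hB : ∀ y, ‖f y‖ ≤ B) (x ξ : E n) :
    ‖∫ y, f y * Complex.ofReal (Real.exp (-‖y - x‖ ^ 2)) * eK y ξ‖
      ≤ ∫ y : E n, B * Real.exp (-‖y‖ ^ 2) := by
  rw [← integral_sub_right_eq_self (fun y : E n => B * Real.exp (-‖y‖ ^ 2)) x]
  refine norm_integral_le_of_norm_le ((aux_gauss_int x).const_mul B)
    (Filter.Eventually.of_forall fun y => ?_)
  rw [norm_mul, norm_mul, aux_eK_norm, mul_one, Complex.norm_real, Real.norm_eq_abs,
    abs_of_pos (Real.exp_pos _)]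
  gcongr
  exact hB y

lemma aux_bdd {n : ℕ} (f : E n → ℂ) (B : ℝ)
    (hB : ∀ y, ‖f y‖ ≤ B) (ξ : E n) : BddAbove (Set.range fun x : E n =>
    ‖∫ y, f y * Complex.ofReal (Real.exp (-‖y - x‖ ^ 2)) * eK y ξ‖) :=
  ⟨_, by rintro - ⟨x, rfl⟩; exact aux_bound f B hB x ξ⟩

lemma aux_Hinf_meas {n : ℕ} (f : E n → ℂ) (hf_meas : Measurable f) (B : ℝ)
    (hB : ∀ y, ‖f y‖ ≤ B) : Measurable (Hinf f) := by
  apply LowerSemicontinuous.measurable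
  unfold Hinf
  refine lowerSemicontinuous_ciSup (aux_bdd f B hB) fun x => ?_
  apply Continuous.lowerSemicontinuous
  apply Continuous.norm
  have hi := aux_fg_int f hf_meas B hB x
  refine continuous_of_dominated (bound := fun y =>
    ‖f y * Complex.ofReal (Real.exp (-‖y - x‖ ^ 2))‖) ?_ ?_ hi.norm ?_
  · intro ξ
    exact hi.aestronglyMeasurable.mul
      (aux_eK_cont.comp (by fun_prop : Continuous fun y : E n => (y, ξ))).aestronglyMeasurable
  · intro ξ
    refine Filter.Eventually.of_forall fun y => ?_
    rw [norm_mul, aux_eK_norm, mul_one]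
  · refine Filter.Eventually.of_forall fun y => ?_
    exact continuous_const.mul (aux_eK_cont.comp (by fun_prop : Continuous fun ξ : E n => (y, ξ)))

open FourierTransform in
lemma aux_fourier {n : ℕ} (g : E n → ℂ) (w : E n) :
    𝓕 g w = ∫ y, g y * eK y ((2 * Real.pi) • w) := by
  rw [Real.fourier_eq']
  congr 1
  ext y
  rw [smul_eq_mul, mul_comm, eK, inner_smul_right]
  congr 2
  push_cast
  ring

lemma aux_cv {n : ℕ} (h : E n → ℝ) (ξ : E n) :
    ∫ η, h ((2 * Real.pi)⁻¹ • (ξ - η)) = (2 * Real.pi) ^ n * ∫ w, h w := by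
  rw [integral_sub_left_eq_self (fun η' => h ((2 * Real.pi)⁻¹ • η')) volume ξ,
    Measure.integral_comp_inv_smul_of_nonneg volume h (by positivity)]
  simp

set_option maxHeartbeats 1000000 in
/-- the pointwise convolution bound (estfop33).  Writing `ψ = Ψ·e^{-|·|²}`
with `Ψ` Schwartz (so that `ψ·ψ₂` with `ψ₂ = e^{|·|²}` is the Schwartz function `Ψ`), for
bounded measurable `f`, all `x, ξ` and `t ∈ (0,1]`:
`|𝓕(f ψ((·−x)/t))(ξ)| ≤ (2π)^{-n/2} (H_{∞,f} * |𝓕(ψ(·/t)ψ₂)|)(ξ)`. -/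
theorem stmt_16 (n : ℕ) (f : E n → ℂ) (hf_meas : Measurable f)
    (hf_bdd : ∃ B : ℝ, ∀ y, ‖f y‖ ≤ B)
    (Ψ : SchwartzMap (E n) ℂ) (x : E n) (t : ℝ) (ht : t ∈ Set.Ioc (0:ℝ) 1) (ξ : E n) :
    ‖∫ y, f y * (Ψ (t⁻¹ • (y - x)) * Complex.ofReal (Real.exp (-‖t⁻¹ • (y - x)‖ ^ 2))) *
        eK y ξ‖
      ≤ (2 * Real.pi) ^ (-(n : ℝ) / 2) *
        ∫ η, Hinf f η *
          ‖∫ y, (Ψ (t⁻¹ • y) * Complex.ofReal (Real.exp (-‖t⁻¹ • y‖ ^ 2)) *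
              Complex.ofReal (Real.exp (‖y‖ ^ 2))) * eK y (ξ - η)‖ := by
  obtain ⟨B, hB⟩ := hf_bdd
  obtain ⟨G, hG⟩ := aux_schwartz Ψ t ht
  simp_rw [← hG]
  set a : E n → ℂ := fun y => f y * Complex.ofReal (Real.exp (-‖y - x‖ ^ 2)) with ha
  have hai : Integrable a := aux_fg_int f hf_meas B hB x
  set F : SchwartzMap (E n) ℂ := FourierTransform.fourier G with hF
  have hFi : Integrable F := F.integrable
  have hH0 : ∀ η, 0 ≤ Hinf f η := fun η => Real.iSup_nonneg fun _ => norm_nonneg _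
  have hHle : ∀ η, Hinf f η ≤ ∫ y : E n, B * Real.exp (-‖y‖ ^ 2) :=
    fun η => ciSup_le fun x => aux_bound f B hB x η
  -- inversion
  have hinv : ∀ z, G z = ∫ w, F w * eK z (-(2 * Real.pi) • w) := by
    intro z
    have h1 : FourierTransform.fourierInv F = G := by simp [hF]
    have h2 : (FourierTransform.fourierInv F : SchwartzMap (E n) ℂ) z = G z := by rw [h1]
    rw [SchwartzMap.fourierInv_coe, Real.fourierInv_eq'] at h2
    rw [← h2]
    congr 1
    ext w
    rw [smul_eq_mul, mul_comm, eK, inner_smul_right, real_inner_comm]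
    congr 2
    push_cast
    ring
  have hFhat : ∀ η, ∫ y, G y * eK y η = F ((2 * Real.pi)⁻¹ • η) := by
    intro η
    rw [hF, SchwartzMap.fourier_coe, aux_fourier, smul_smul,
      mul_inv_cancel₀ (by positivity), one_smul]
  have hfac : ∀ y, f y * (Ψ (t⁻¹ • (y - x)) *
      Complex.ofReal (Real.exp (-‖t⁻¹ • (y - x)‖ ^ 2))) = a y * G (y - x) := by
    intro y
    rw [hG, ha]
    have : Complex.ofReal (Real.exp (-‖y - x‖ ^ 2)) * Complex.ofReal (Real.exp (‖y - x‖ ^ 2))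
        = 1 := by
      rw [← Complex.ofReal_mul, ← Real.exp_add]
      simp
    linear_combination (-(f y * (Ψ (t⁻¹ • (y - x)) *
      Complex.ofReal (Real.exp (-‖t⁻¹ • (y - x)‖ ^ 2))))) * this
  simp_rw [hfac, hFhat]
  have hK : ∀ y w, eK (y - x) (-(2 * Real.pi) • w) * eK y ξ
      = eK x ((2 * Real.pi) • w) * eK y (ξ - (2 * Real.pi) • w) := by
    intro y w
    simp only [eK, ← Complex.exp_add, inner_smul_right, inner_sub_left, inner_sub_right]
    congr 1
    push_cast
    ring
  have hmain : ∫ y, a y * G (y - x) * eK y ξ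
      = ∫ w, F w * eK x ((2 * Real.pi) • w) * ∫ y, a y * eK y (ξ - (2 * Real.pi) • w) := by
    calc ∫ y, a y * G (y - x) * eK y ξ
        = ∫ y, ∫ w, a y * F w * (eK x ((2 * Real.pi) • w) * eK y (ξ - (2 * Real.pi) • w)) := by
          congr 1
          ext y
          rw [hinv, mul_right_comm, ← integral_const_mul]
          congr 1
          ext w
          rw [← hK]
          ring
      _ = ∫ w, ∫ y, a y * F w * (eK x ((2 * Real.pi) • w) * eK y (ξ - (2 * Real.pi) • w)) := by
          apply integral_integral_swap
          refine (hai.mul_prod hFi).mul_bdd (c := 1) ?_ ?_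
          · refine Continuous.aestronglyMeasurable ?_
            exact (aux_eK_cont.comp (by fun_prop :
                Continuous fun p : E n × E n => (x, (2 * Real.pi) • p.2))).mul
              (aux_eK_cont.comp (by fun_prop :
                Continuous fun p : E n × E n => (p.1, ξ - (2 * Real.pi) • p.2)))
          · refine Filter.Eventually.of_forall fun p => ?_
            simp [aux_eK_norm]
      _ = _ := by
          congr 1
          ext w
          rw [← integral_const_mul]
          congr 1
          ext y
          ring
  rw [hmain]
  set h : E n → ℝ := fun w => Hinf f (ξ - (2 * Real.pi) • w) * ‖F w‖ with hh
  have hhi : Integrable h := by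
    refine hFi.norm.bdd_mul (c := ∫ y : E n, B * Real.exp (-‖y‖ ^ 2)) ?_ ?_
    · exact ((aux_Hinf_meas f hf_meas B hB).comp (by fun_prop)).aestronglyMeasurable
    · refine Filter.Eventually.of_forall fun w => ?_
      rw [Real.norm_eq_abs, abs_of_nonneg (hH0 _)]
      exact hHle _
  have hle : ‖∫ w, F w * eK x ((2 * Real.pi) • w) * ∫ y, a y * eK y (ξ - (2 * Real.pi) • w)‖
      ≤ ∫ w, h w := by
    refine norm_integral_le_of_norm_le hhi (Filter.Eventually.of_forall fun w => ?_)
    rw [norm_mul, norm_mul, aux_eK_norm, mul_one, mul_comm]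
    exact mul_le_mul_of_nonneg_right (le_ciSup (aux_bdd f B hB _) x) (norm_nonneg _)
  have hcv : ∫ η, Hinf f η * ‖F ((2 * Real.pi)⁻¹ • (ξ - η))‖ = (2 * Real.pi) ^ n * ∫ w, h w := by
    rw [← aux_cv h ξ]
    congr 1
    ext η
    simp only [hh]
    rw [smul_smul, mul_inv_cancel₀ (by positivity), one_smul, sub_sub_cancel]
  rw [hcv, ← mul_assoc]
  refine hle.trans (le_mul_of_one_le_left (integral_nonneg fun w =>
    mul_nonneg (hH0 _) (norm_nonneg _)) ?_)
  rw [← Real.rpow_natCast, ← Real.rpow_add (by positivity)]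
  refine Real.one_le_rpow (by linarith [Real.pi_gt_three]) ?_
  have : (0 : ℝ) ≤ n := n.cast_nonneg
  linarith
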